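/- Let R be a rigid subcategory of C and X a two-term maximal R[1]-rigid subcategory of C. If X is covariantly finite in C or contravariantly finite in C, then R ⊆ X[-1]∗X, i.e. every object of R admits a triangle X[-1] → R → X' → X with X, X' ∈ X. -/

import Mathlib

/-!
Setting: `C` is a Hom-finite Krull–Schmidt `k`-linear triangulated category over an
algebraically closed field `k` (Krull–Schmidt is encoded as Hom-finiteness together with
idempotent completeness). Subcategories are identified with their classes of objects and
are always assumed full, closed under isomorphisms, direct sums and direct summands.
-/

open CategoryTheory CategoryTheory.Limits CategoryTheory.Pretriangulated Opposite

universe v u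

variable {C : Type u} [Category.{v} C] [Preadditive C] [HasZeroObject C] [HasShift C ℤ]
  [∀ n : ℤ, (shiftFunctor C n).Additive] [Pretriangulated C]

/-- `Y` is a direct summand (retract) of `X`. -/
def IsRetractOf {D : Type*} [Category D] (Y X : D) : Prop :=
  ∃ (s : Y ⟶ X) (r : X ⟶ Y), s ≫ r = 𝟙 Y

/-- `S` is a direct sum (biproduct) of `F` and `G`. -/
def IsDirectSumOf {D : Type*} [Category D] [Preadditive D] (S F G : D) : Prop :=
  ∃ (i : F ⟶ S) (j : G ⟶ S) (p : S ⟶ F) (q : S ⟶ G),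
    i ≫ p = 𝟙 F ∧ j ≫ q = 𝟙 G ∧ i ≫ q = 0 ∧ j ≫ p = 0 ∧ p ≫ i + q ≫ j = 𝟙 S

/-- A subcategory of an additive category, identified with its class of objects:
closed under isomorphisms, finite direct sums and direct summands. -/
def IsSubcat {D : Type*} [Category D] [Preadditive D] (S : Set D) : Prop :=
  (∀ ⦃X Y : D⦄, (X ≅ Y) → X ∈ S → Y ∈ S) ∧
  (∀ ⦃F G T : D⦄, F ∈ S → G ∈ S → IsDirectSumOf T F G → T ∈ S) ∧
  (∀ ⦃X Y : D⦄, X ∈ S → IsRetractOf Y X → Y ∈ S)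

/-- `f : X ⟶ A` is a right `𝓧`-approximation of `A`:
every map `X' ⟶ A` with `X' ∈ 𝓧` factors through `f`. -/
def IsRightApprox {D : Type*} [Category D] (𝓧 : Set D) {X A : D} (f : X ⟶ A) : Prop :=
  ∀ X' ∈ 𝓧, ∀ g : X' ⟶ A, ∃ h : X' ⟶ X, h ≫ f = g

/-- `f : A ⟶ X` is a left `𝓧`-approximation of `A`:
every map `A ⟶ X'` with `X' ∈ 𝓧` factors through `f`. -/
def IsLeftApprox {D : Type*} [Category D] (𝓧 : Set D) {A X : D} (f : A ⟶ X) : Prop :=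
  ∀ X' ∈ 𝓧, ∀ g : A ⟶ X', ∃ h : X ⟶ X', f ≫ h = g

/-- `𝓧` is contravariantly finite: every object admits a right `𝓧`-approximation. -/
def ContravariantlyFinite {D : Type*} [Category D] (𝓧 : Set D) : Prop :=
  ∀ A : D, ∃ X ∈ 𝓧, ∃ f : X ⟶ A, IsRightApprox 𝓧 f

/-- `𝓧` is covariantly finite: every object admits a left `𝓧`-approximation. -/
def CovariantlyFinite {D : Type*} [Category D] (𝓧 : Set D) : Prop :=
  ∀ A : D, ∃ X ∈ 𝓧, ∃ f : A ⟶ X, IsLeftApprox 𝓧 f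

/-- `𝓧` is functorially finite. -/
def FunctoriallyFinite {D : Type*} [Category D] (𝓧 : Set D) : Prop :=
  ContravariantlyFinite 𝓧 ∧ CovariantlyFinite 𝓧

/-- `𝓧 ∨ add M`: the smallest subcategory containing `𝓧` and `M`. -/
def veeAdd {D : Type*} [Category D] [Preadditive D] (𝓧 : Set D) (M : D) : Set D :=
  ⋂₀ {T : Set D | IsSubcat T ∧ 𝓧 ⊆ T ∧ M ∈ T}

/-- The shift `𝓢⟦n⟧` of a subcategory (closed under isomorphism). -/
def shiftSet (𝓢 : Set C) (n : ℤ) : Set C := {Y | ∃ X ∈ 𝓢, Nonempty (Y ≅ X⟦n⟧)}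

/-- `𝓐 ∗ 𝓑`: the class of objects `M` admitting a distinguished triangle
`A → M → B → A⟦1⟧` with `A ∈ 𝓐` and `B ∈ 𝓑`. -/
def starSet (𝓐 𝓑 : Set C) : Set C :=
  {M | ∃ A ∈ 𝓐, ∃ B ∈ 𝓑, ∃ (f : A ⟶ M) (g : M ⟶ B) (h : B ⟶ A⟦(1:ℤ)⟧),
    Triangle.mk f g h ∈ distTriang C}

/-- `𝓡 ∗ 𝓡[1]`, the class of two-term objects with respect to `𝓡`. -/
def twoTerm (𝓡 : Set C) : Set C := starSet 𝓡 (shiftSet 𝓡 1)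

/-- `𝓡` is rigid: `Hom(R, R'[1]) = 0` for all `R, R' ∈ 𝓡`. -/
def IsRigidSubcat (𝓡 : Set C) : Prop :=
  ∀ R ∈ 𝓡, ∀ R' ∈ 𝓡, ∀ φ : R ⟶ R'⟦(1:ℤ)⟧, φ = 0

/-- `φ` lies in the ideal `[𝓡[1]]` of morphisms factoring through an object of `𝓡⟦1⟧`. -/
def InShiftIdeal (𝓡 : Set C) {A B : C} (φ : A ⟶ B) : Prop :=
  ∃ R ∈ 𝓡, ∃ (a : A ⟶ R⟦(1:ℤ)⟧) (b : R⟦(1:ℤ)⟧ ⟶ B), φ = a ≫ b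

/-- `𝓧` is `𝓡[1]`-rigid: `[𝓡[1]](𝓧, 𝓧[1]) = 0`. -/
def IsRelRigid (𝓡 𝓧 : Set C) : Prop :=
  ∀ X ∈ 𝓧, ∀ X' ∈ 𝓧, ∀ φ : X ⟶ X'⟦(1:ℤ)⟧, InShiftIdeal 𝓡 φ → φ = 0

/-- `[𝓡[1]](M, 𝓧[1]) = 0`. -/
def relOrthTo (𝓡 𝓧 : Set C) (M : C) : Prop :=
  ∀ X ∈ 𝓧, ∀ φ : M ⟶ X⟦(1:ℤ)⟧, InShiftIdeal 𝓡 φ → φ = 0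

/-- `[𝓡[1]](𝓧, M[1]) = 0`. -/
def relOrthFrom (𝓡 𝓧 : Set C) (M : C) : Prop :=
  ∀ X ∈ 𝓧, ∀ φ : X ⟶ M⟦(1:ℤ)⟧, InShiftIdeal 𝓡 φ → φ = 0

/-- `𝓧 ⊆ 𝓡 ∗ 𝓡[1]` is two-term maximal `𝓡[1]`-rigid: it is `𝓡[1]`-rigid and for every
`M ∈ 𝓡 ∗ 𝓡[1]`, `[𝓡[1]](𝓧 ∨ add M, (𝓧 ∨ add M)[1]) = 0` implies `M ∈ 𝓧`. -/
def IsTwoTermMaxRelRigid (𝓡 𝓧 : Set C) : Prop :=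
  𝓧 ⊆ twoTerm 𝓡 ∧ IsRelRigid 𝓡 𝓧 ∧
  ∀ M ∈ twoTerm 𝓡, IsRelRigid 𝓡 (veeAdd 𝓧 M) → M ∈ 𝓧

/-- `𝓧 ⊆ 𝓡 ∗ 𝓡[1]` is two-term weak `𝓡[1]`-cluster tilting: `𝓡 ⊆ 𝓧[-1] ∗ 𝓧` and
`𝓧 = {M ∈ 𝓡 ∗ 𝓡[1] : [𝓡[1]](M, 𝓧[1]) = 0 and [𝓡[1]](𝓧, M[1]) = 0}`. -/
def IsTwoTermWeakRelCT (𝓡 𝓧 : Set C) : Prop :=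
  𝓧 ⊆ twoTerm 𝓡 ∧
  (∀ R ∈ 𝓡, R ∈ starSet (shiftSet 𝓧 (-1)) 𝓧) ∧
  (∀ M : C, M ∈ 𝓧 ↔ M ∈ twoTerm 𝓡 ∧ relOrthTo 𝓡 𝓧 M ∧ relOrthFrom 𝓡 𝓧 M)

/-- `𝓧 ⊆ 𝓡 ∗ 𝓡[1]` is two-term `𝓡[1]`-cluster tilting: `𝓧` is contravariantly finite and
`𝓧 = {M ∈ 𝓡 ∗ 𝓡[1] : [𝓡[1]](M, 𝓧[1]) = 0 and [𝓡[1]](𝓧, M[1]) = 0}`. -/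
def IsTwoTermRelCT (𝓡 𝓧 : Set C) : Prop :=
  𝓧 ⊆ twoTerm 𝓡 ∧ ContravariantlyFinite 𝓧 ∧
  (∀ M : C, M ∈ 𝓧 ↔ M ∈ twoTerm 𝓡 ∧ relOrthTo 𝓡 𝓧 M ∧ relOrthFrom 𝓡 𝓧 M)

/-!
Complete a left `𝓧`-approximation `R ⟶ X`, or a right `𝓧`-approximation `Y ⟶ R⟦1⟧`, to a triangle
`R ⟶ X ⟶ Y ⟶ R⟦1⟧`. One of `X`, `Y` lies in `𝓧`, and maximality forces the other into `𝓧`: the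
approximation property and the rigidity of `𝓡` give the required vanishing of `[𝓡[1]]`, and the
other object is again two-term because its presentation by objects of `𝓡` is the cocone of a
composite whose two factors have cocones in `𝓡`. That cocone is a direct summand of a sum of
objects of `𝓡`, by an argument with weak pullbacks instead of the octahedral axiom.
-/

section Subcat

variable {D : Type*} [Category D]

lemma IsRetractOf.of_iso {X Y : D} (e : X ≅ Y) : IsRetractOf Y X :=
  ⟨e.inv, e.hom, e.inv_hom_id⟩

variable [Preadditive D]

lemma IsSubcat.of_sum_of_retract {S : Set D}
    (sum : ∀ ⦃F G T : D⦄, F ∈ S → G ∈ S → IsDirectSumOf T F G → T ∈ S)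
    (retract : ∀ ⦃X Y : D⦄, X ∈ S → IsRetractOf Y X → Y ∈ S) : IsSubcat S :=
  ⟨fun _ _ e hX => retract hX (.of_iso e), sum, retract⟩

lemma IsSubcat.biprod_mem [HasBinaryBiproducts D] {S : Set D} (hS : IsSubcat S) {F G : D}
    (hF : F ∈ S) (hG : G ∈ S) : (F ⊞ G) ∈ S :=
  hS.2.1 hF hG ⟨biprod.inl, biprod.inr, biprod.fst, biprod.snd, biprod.inl_fst,
    biprod.inr_snd, biprod.inl_snd, biprod.inr_fst, biprod.total⟩

lemma veeAdd_subset {𝓧 T : Set D} {M : D} (hT : IsSubcat T) (h𝓧 : 𝓧 ⊆ T) (hM : M ∈ T) :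
    veeAdd 𝓧 M ⊆ T :=
  Set.sInter_subset_of_mem ⟨hT, h𝓧, hM⟩

end Subcat

section ShiftSet

variable {D : Type*} [Category D] [HasShift D ℤ] [Preadditive D] {𝓡 : Set D}

lemma IsRigidSubcat.eq_zero (h𝓡 : IsRigidSubcat 𝓡) {R S : D} (hR : R ∈ 𝓡)
    (hS : S ∈ shiftSet 𝓡 1) (φ : R ⟶ S) : φ = 0 := by
  obtain ⟨R', hR', ⟨θ⟩⟩ := hS
  rw [← cancel_mono θ.hom, h𝓡 R hR R' hR' (φ ≫ θ.hom), zero_comp]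

lemma shift_neg_one_mem_of_mem_shiftSet_one (h𝓡 : IsSubcat 𝓡) {S : D} (hS : S ∈ shiftSet 𝓡 1) :
    S⟦(-1 : ℤ)⟧ ∈ 𝓡 := by
  obtain ⟨R, hR, ⟨θ⟩⟩ := hS
  exact h𝓡.1 ((shiftFunctor D (-1 : ℤ)).mapIso θ ≪≫ shiftShiftNeg R (1 : ℤ)).symm hR

end ShiftSet

section RelOrth

variable {D : Type*} [Category D] [HasShift D ℤ]

lemma InShiftIdeal.precomp {𝓡 : Set D} {A' A B : D} {φ : A ⟶ B} (hφ : InShiftIdeal 𝓡 φ)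
    (x : A' ⟶ A) : InShiftIdeal 𝓡 (x ≫ φ) := by
  obtain ⟨R, hR, a, b, rfl⟩ := hφ
  exact ⟨R, hR, x ≫ a, b, (Category.assoc _ _ _).symm⟩

lemma InShiftIdeal.postcomp {𝓡 : Set D} {A B B' : D} {φ : A ⟶ B} (hφ : InShiftIdeal 𝓡 φ)
    (y : B ⟶ B') : InShiftIdeal 𝓡 (φ ≫ y) := by
  obtain ⟨R, hR, a, b, rfl⟩ := hφ
  exact ⟨R, hR, a, b ≫ y, Category.assoc _ _ _⟩

variable [Preadditive D]

/-- `[𝓡[1]](A, B[1]) = 0` for two objects `A` and `B`: the common objectwise form of `IsRelRigid`,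
`relOrthTo` and `relOrthFrom`, each of which unfolds to it. -/
def RelOrth (𝓡 : Set D) (A B : D) : Prop :=
  ∀ φ : A ⟶ B⟦(1 : ℤ)⟧, InShiftIdeal 𝓡 φ → φ = 0

variable {𝓡 𝓧 : Set D}

lemma isSubcat_setOf_relOrth_left (B : D) : IsSubcat {A | RelOrth 𝓡 A B} := by
  refine .of_sum_of_retract ?_ ?_
  · rintro F G T hF hG ⟨i, j, p, q, -, -, -, -, hsum⟩ φ hφ
    calc φ = p ≫ i ≫ φ + q ≫ j ≫ φ := by simpa using (hsum =≫ φ).symm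
      _ = 0 := by rw [hF _ (hφ.precomp i), hG _ (hφ.precomp j), comp_zero, comp_zero, add_zero]
  · rintro X Y hX ⟨s, r, hsr⟩ φ hφ
    calc φ = s ≫ r ≫ φ := by rw [reassoc_of% hsr]
      _ = 0 := by rw [hX _ (hφ.precomp r), comp_zero]

lemma isSubcat_setOf_relOrth_right [(shiftFunctor D (1 : ℤ)).Additive] (A : D) :
    IsSubcat {B | RelOrth 𝓡 A B} := by
  refine .of_sum_of_retract ?_ ?_
  · rintro F G T hF hG ⟨i, j, p, q, -, -, -, -, hsum⟩ φ hφ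
    calc φ = φ ≫ (p ≫ i + q ≫ j)⟦(1 : ℤ)⟧' := by
          rw [hsum, CategoryTheory.Functor.map_id, Category.comp_id]
      _ = (φ ≫ p⟦(1 : ℤ)⟧') ≫ i⟦(1 : ℤ)⟧' + (φ ≫ q⟦(1 : ℤ)⟧') ≫ j⟦(1 : ℤ)⟧' := by
          simp only [Functor.map_add, Functor.map_comp, Preadditive.comp_add, Category.assoc]
      _ = 0 := by rw [hF _ (hφ.postcomp _), hG _ (hφ.postcomp _), zero_comp, zero_comp, add_zero]
  · rintro X Y hX ⟨s, r, hsr⟩ φ hφ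
    calc φ = (φ ≫ s⟦(1 : ℤ)⟧') ≫ r⟦(1 : ℤ)⟧' := by
          rw [Category.assoc, ← Functor.map_comp, hsr, CategoryTheory.Functor.map_id,
            Category.comp_id]
      _ = 0 := by rw [hX _ (hφ.postcomp _), zero_comp]

lemma IsRelRigid.veeAdd [(shiftFunctor D (1 : ℤ)).Additive] {M : D} (h𝓧 : IsRelRigid 𝓡 𝓧)
    (hTo : relOrthTo 𝓡 𝓧 M) (hFrom : relOrthFrom 𝓡 𝓧 M) (hM : RelOrth 𝓡 M M) :
    IsRelRigid 𝓡 (veeAdd 𝓧 M) := by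
  intro A hA
  have hA𝓧 : ∀ X ∈ 𝓧, RelOrth 𝓡 A X := fun X hX =>
    veeAdd_subset (isSubcat_setOf_relOrth_left X) (fun X' hX' => h𝓧 X' hX' X hX) (hTo X hX) hA
  have hAM : RelOrth 𝓡 A M :=
    veeAdd_subset (isSubcat_setOf_relOrth_left M) hFrom hM hA
  exact veeAdd_subset (isSubcat_setOf_relOrth_right A) hA𝓧 hAM

lemma RelOrth.of_isRightApprox {A X Y : D} {g : X ⟶ Y} (hg : IsRightApprox 𝓡 g)
    (hX : RelOrth 𝓡 A X) : RelOrth 𝓡 A Y := by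
  rintro _ ⟨R, hR, a, b, rfl⟩
  obtain ⟨c, hc⟩ := hg R hR ((shiftFunctor D (1 : ℤ)).preimage b)
  have hb : b = c⟦(1 : ℤ)⟧' ≫ g⟦(1 : ℤ)⟧' := by
    rw [← Functor.map_comp, hc, Functor.map_preimage]
  rw [hb, ← Category.assoc, hX (a ≫ c⟦(1 : ℤ)⟧') ⟨R, hR, a, _, rfl⟩, zero_comp]

lemma RelOrth.of_isLeftApprox_shift {X Z B : D} {p : Z ⟶ X} (hp : IsLeftApprox (shiftSet 𝓡 1) p)
    (hX : RelOrth 𝓡 X B) : RelOrth 𝓡 Z B := by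
  rintro _ ⟨R, hR, a, b, rfl⟩
  obtain ⟨c, rfl⟩ := hp _ ⟨R, hR, ⟨Iso.refl _⟩⟩ a
  rw [Category.assoc, hX (c ≫ b) ⟨R, hR, c, b, rfl⟩, comp_zero]

end RelOrth

section CompositionOfTriangles

lemma exists_lift_of_isIso_hom₃ {T T' : Triangle C} (hT : T ∈ distTriang C)
    (hT' : T' ∈ distTriang C) (φ : T ⟶ T') [IsIso φ.hom₃] {A : C} (x : A ⟶ T.obj₂)
    (y : A ⟶ T'.obj₁) (hxy : x ≫ φ.hom₂ = y ≫ T'.mor₁) :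
    ∃ w : A ⟶ T.obj₁, w ≫ T.mor₁ = x ∧ w ≫ φ.hom₁ = y := by
  obtain ⟨w₀, hw₀⟩ : ∃ w₀ : A ⟶ T.obj₁, x = w₀ ≫ T.mor₁ := by
    refine Triangle.coyoneda_exact₂ T hT x ?_
    rw [← cancel_mono φ.hom₃, Category.assoc, φ.comm₂, reassoc_of% hxy,
      comp_distTriang_mor_zero₁₂ T' hT', comp_zero, zero_comp]
  -- `w₀` is corrected by a morphism through the connecting map of `T`, which the composite
  -- with `T.mor₁` does not see.
  obtain ⟨z, hz⟩ : ∃ z : A⟦(1 : ℤ)⟧ ⟶ T'.obj₃, (y - w₀ ≫ φ.hom₁)⟦(1 : ℤ)⟧' = z ≫ T'.mor₃ := by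
    refine Triangle.coyoneda_exact₁ T' hT' _ ?_
    rw [← Functor.map_comp, Preadditive.sub_comp, Category.assoc, ← φ.comm₁, ← hxy, hw₀,
      Category.assoc, sub_self, Functor.map_zero]
  let v : A ⟶ T.obj₁ := (shiftFunctor C (1 : ℤ)).preimage (z ≫ inv φ.hom₃ ≫ T.mor₃)
  have hv₁ : v ≫ T.mor₁ = 0 := by
    apply (shiftFunctor C (1 : ℤ)).map_injective
    simp only [v, Functor.map_comp, Functor.map_preimage, Category.assoc,
      comp_distTriang_mor_zero₃₁ T hT, comp_zero, Functor.map_zero]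
  have hv : v ≫ φ.hom₁ = y - w₀ ≫ φ.hom₁ := by
    apply (shiftFunctor C (1 : ℤ)).map_injective
    simp only [v, Functor.map_comp, Functor.map_preimage, Category.assoc, φ.comm₃,
      IsIso.inv_hom_id_assoc, hz]
  exact ⟨w₀ + v, by rw [Preadditive.add_comp, hv₁, add_zero, hw₀],
    by rw [Preadditive.add_comp, hv, add_sub_cancel]⟩

variable {A B X R Y K : C} {a : A ⟶ B} {π : B ⟶ X} {d : X ⟶ A⟦(1 : ℤ)⟧}
  {f : R ⟶ X} {g : X ⟶ Y} {h : Y ⟶ R⟦(1 : ℤ)⟧} {k : K ⟶ B} {κ : Y ⟶ K⟦(1 : ℤ)⟧}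

lemma exists_factor_of_comp_eq_zero (Hπ : Triangle.mk a π d ∈ distTriang C)
    (Hg : Triangle.mk f g h ∈ distTriang C) (Hπg : Triangle.mk k (π ≫ g) κ ∈ distTriang C)
    {ρ : K ⟶ R} (hρ : κ ≫ ρ⟦(1 : ℤ)⟧' = h) {T : C} (ε : T ⟶ K) (hεk : ε ≫ k = 0)
    (hερ : ε ≫ ρ = 0) : ∃ (u : T ⟶ A) (v : A ⟶ K), u ≫ v = ε := by
  obtain ⟨ζ, hζ : ε⟦(1 : ℤ)⟧' = ζ ≫ κ⟩ : ∃ ζ : T⟦(1 : ℤ)⟧ ⟶ Y, ε⟦(1 : ℤ)⟧' = ζ ≫ κ := by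
    refine Triangle.coyoneda_exact₁ _ Hπg _ ?_
    change ε⟦(1 : ℤ)⟧' ≫ k⟦(1 : ℤ)⟧' = 0
    rw [← Functor.map_comp, hεk, Functor.map_zero]
  obtain ⟨ξ, rfl⟩ : ∃ ξ : T⟦(1 : ℤ)⟧ ⟶ X, ζ = ξ ≫ g := by
    refine Triangle.coyoneda_exact₃ _ Hg ζ ?_
    change ζ ≫ h = 0
    rw [← hρ, ← Category.assoc, ← hζ, ← Functor.map_comp, hερ, Functor.map_zero]
  obtain ⟨θ, hθ⟩ : ∃ θ : A⟦(1 : ℤ)⟧ ⟶ K⟦(1 : ℤ)⟧, g ≫ κ = d ≫ θ := by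
    refine Triangle.yoneda_exact₃ _ Hπ _ ?_
    exact (Category.assoc _ _ _).symm.trans (comp_distTriang_mor_zero₂₃ _ Hπg)
  refine ⟨(shiftFunctor C (1 : ℤ)).preimage (ξ ≫ d), (shiftFunctor C (1 : ℤ)).preimage θ, ?_⟩
  apply (shiftFunctor C (1 : ℤ)).map_injective
  rw [Functor.map_comp, Functor.map_preimage, Functor.map_preimage, hζ, Category.assoc,
    Category.assoc, hθ]

/-- The octahedral axiom would give `K ≅ A ⊞ R` here, since the triangle `A ⟶ K ⟶ R ⟶ A⟦1⟧` splits;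
without it, the second copy of `A` absorbs the possible failure of that isomorphism. -/
lemma isRetractOf_cocone_comp (Hπ : Triangle.mk a π d ∈ distTriang C)
    (Hg : Triangle.mk f g h ∈ distTriang C) (Hπg : Triangle.mk k (π ≫ g) κ ∈ distTriang C)
    (b : R ⟶ B) (hb : b ≫ π = f) : IsRetractOf K ((A ⊞ R) ⊞ A) := by
  obtain ⟨ρ : K ⟶ R, hkπ : k ≫ π = ρ ≫ f, hρ⟩ :=
    complete_distinguished_triangle_morphism₁ _ _ Hπg Hg π (𝟙 Y) (Category.comp_id _)
  replace hρ : κ ≫ ρ⟦(1 : ℤ)⟧' = h := hρ.trans (Category.id_comp _)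
  let φ : Triangle.mk k (π ≫ g) κ ⟶ Triangle.mk f g h :=
    Triangle.homMk _ _ ρ π (𝟙 Y) hkπ (Category.comp_id _) (hρ.trans (Category.id_comp _).symm)
  have : IsIso φ.hom₃ := inferInstanceAs (IsIso (𝟙 Y))
  have haπ : a ≫ π = 0 := comp_distTriang_mor_zero₁₂ _ Hπ
  obtain ⟨w₁ : A ⟶ K, hw₁k : w₁ ≫ k = a, hw₁ρ : w₁ ≫ ρ = 0⟩ :=
    exists_lift_of_isIso_hom₃ Hπg Hg φ a 0 (haπ.trans zero_comp.symm)
  obtain ⟨w₂ : R ⟶ K, hw₂k : w₂ ≫ k = b, hw₂ρ : w₂ ≫ ρ = 𝟙 R⟩ :=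
    exists_lift_of_isIso_hom₃ Hπg Hg φ b (𝟙 R) (hb.trans (Category.id_comp f).symm)
  obtain ⟨v₁ : K ⟶ A, hv₁ : k - ρ ≫ b = v₁ ≫ a⟩ :=
    Triangle.coyoneda_exact₂ _ Hπ (k - ρ ≫ b) <| by
      change (k - ρ ≫ b) ≫ π = 0
      rw [Preadditive.sub_comp, Category.assoc, hb, hkπ, sub_self]
  let ε : K ⟶ K := 𝟙 K - (v₁ ≫ w₁ + ρ ≫ w₂)
  have hεk : ε ≫ k = 0 := by
    simp only [ε, Preadditive.sub_comp, Preadditive.add_comp, Category.id_comp, Category.assoc,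
      hw₁k, hw₂k, ← hv₁, sub_add_cancel, sub_self]
  have hερ : ε ≫ ρ = 0 := by
    simp only [ε, Preadditive.sub_comp, Preadditive.add_comp, Category.id_comp, Category.assoc,
      hw₁ρ, hw₂ρ, comp_zero, Category.comp_id, zero_add, sub_self]
  obtain ⟨u, v, huv⟩ := exists_factor_of_comp_eq_zero Hπ Hg Hπg hρ ε hεk hερ
  refine ⟨biprod.lift (biprod.lift v₁ ρ) u, biprod.desc (biprod.desc w₁ w₂) v, ?_⟩
  rw [biprod.lift_desc, biprod.lift_desc, huv, add_sub_cancel]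

lemma IsSubcat.exists_cocone_comp_mem {𝓡 : Set C} (h𝓡 : IsSubcat 𝓡) (hA : A ∈ 𝓡) (hR : R ∈ 𝓡)
    (Hπ : Triangle.mk a π d ∈ distTriang C) (Hg : Triangle.mk f g h ∈ distTriang C)
    (b : R ⟶ B) (hb : b ≫ π = f) :
    ∃ K ∈ 𝓡, ∃ (k : K ⟶ B) (κ : Y ⟶ K⟦(1 : ℤ)⟧), Triangle.mk k (π ≫ g) κ ∈ distTriang C := by
  obtain ⟨K, k, κ, H⟩ := distinguished_cocone_triangle₁ (π ≫ g)
  exact ⟨K, h𝓡.2.2 (h𝓡.biprod_mem (h𝓡.biprod_mem hA hR) hA) (isRetractOf_cocone_comp Hπ Hg H b hb),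
    k, κ, H⟩

end CompositionOfTriangles

section TwoTerm

variable {𝓡 𝓧 : Set C}

variable {R X Y : C} {f : R ⟶ X} {g : X ⟶ Y} {h : Y ⟶ R⟦(1 : ℤ)⟧}

lemma mem_starSet_shiftSet_neg_one (hX : X ∈ 𝓧) (hY : Y ∈ 𝓧)
    (H : Triangle.mk f g h ∈ distTriang C) : R ∈ starSet (shiftSet 𝓧 (-1)) 𝓧 :=
  ⟨_, ⟨Y, hY, ⟨Iso.refl _⟩⟩, X, hX, _, f, _, inv_rot_of_distTriang _ H⟩

lemma cone_mem_twoTerm (h𝓡sub : IsSubcat 𝓡) (h𝓡 : IsRigidSubcat 𝓡) (hR : R ∈ 𝓡)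
    (hX : X ∈ twoTerm 𝓡) (H : Triangle.mk f g h ∈ distTriang C) : Y ∈ twoTerm 𝓡 := by
  obtain ⟨R₀, hR₀, S, hS, π, d, e, HX⟩ := hX
  obtain ⟨b, hb : f = b ≫ π⟩ := Triangle.coyoneda_exact₂ _ HX f (h𝓡.eq_zero hR hS _)
  obtain ⟨K, hK, k, κ, HK⟩ := h𝓡sub.exists_cocone_comp_mem
    (shift_neg_one_mem_of_mem_shiftSet_one h𝓡sub hS) hR (inv_rot_of_distTriang _ HX) H b hb.symm
  exact ⟨R₀, hR₀, _, ⟨K, hK, ⟨Iso.refl _⟩⟩, _, _, _, rot_of_distTriang _ HK⟩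

lemma mem_twoTerm_of_cone_mem (h𝓡sub : IsSubcat 𝓡) (h𝓡 : IsRigidSubcat 𝓡) (hR : R ∈ 𝓡)
    (hY : Y ∈ twoTerm 𝓡) (H : Triangle.mk f g h ∈ distTriang C) : X ∈ twoTerm 𝓡 := by
  obtain ⟨R₀, hR₀, S, hS, π, d, e, HY⟩ := hY
  obtain ⟨b, hb : π = b ≫ g⟩ := Triangle.coyoneda_exact₃ _ H π (h𝓡 R₀ hR₀ R hR _)
  obtain ⟨K, hK, k, κ, HK⟩ := h𝓡sub.exists_cocone_comp_mem hR hR₀ H HY b hb.symm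
  exact ⟨K, hK, S, hS, k, _, κ, HK⟩

lemma IsRigidSubcat.isRightApprox (h𝓡 : IsRigidSubcat 𝓡) (hR : R ∈ 𝓡)
    (H : Triangle.mk f g h ∈ distTriang C) : IsRightApprox 𝓡 g := by
  intro R' hR' y
  obtain ⟨x, hx⟩ := Triangle.coyoneda_exact₃ _ H y (h𝓡 R' hR' R hR _)
  exact ⟨x, hx.symm⟩

lemma IsRigidSubcat.isLeftApprox (h𝓡 : IsRigidSubcat 𝓡) (hR : R ∈ 𝓡)
    (H : Triangle.mk f g h ∈ distTriang C) : IsLeftApprox (shiftSet 𝓡 1) g := by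
  intro S hS x
  obtain ⟨y, hy⟩ := Triangle.yoneda_exact₂ _ H x (h𝓡.eq_zero hR hS _)
  exact ⟨y, hy.symm⟩

lemma relOrthTo_cone_of_isLeftApprox (hX : relOrthTo 𝓡 𝓧 X) (hf : IsLeftApprox 𝓧 f)
    (H : Triangle.mk f g h ∈ distTriang C) : relOrthTo 𝓡 𝓧 Y := by
  intro X' hX' φ hφ
  obtain ⟨ψ : R⟦(1 : ℤ)⟧ ⟶ X'⟦(1 : ℤ)⟧, hψ : φ = h ≫ ψ⟩ :=
    Triangle.yoneda_exact₃ _ H φ (hX X' hX' _ (hφ.precomp g))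
  obtain ⟨u, hu⟩ := hf X' hX' ((shiftFunctor C (1 : ℤ)).preimage ψ)
  have hhf : h ≫ f⟦(1 : ℤ)⟧' = 0 := comp_distTriang_mor_zero₃₁ _ H
  calc φ = h ≫ f⟦(1 : ℤ)⟧' ≫ u⟦(1 : ℤ)⟧' := by
        rw [hψ, ← Functor.map_comp, hu, Functor.map_preimage]
    _ = 0 := by rw [reassoc_of% hhf, zero_comp]

lemma relOrthFrom_of_isRightApprox_cone (hY : relOrthFrom 𝓡 𝓧 Y) (hh : IsRightApprox 𝓧 h)
    (H : Triangle.mk f g h ∈ distTriang C) : relOrthFrom 𝓡 𝓧 X := by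
  intro X' hX' φ hφ
  obtain ⟨c, hc⟩ : ∃ c : X' ⟶ R⟦(1 : ℤ)⟧, φ = c ≫ (-f⟦(1 : ℤ)⟧') :=
    Triangle.coyoneda_exact₁ _ (rot_of_distTriang _ H) φ (hY X' hX' _ (hφ.postcomp _))
  obtain ⟨u, rfl⟩ := hh X' hX' c
  have hhf : h ≫ f⟦(1 : ℤ)⟧' = 0 := comp_distTriang_mor_zero₃₁ _ H
  rw [hc, Category.assoc, Preadditive.comp_neg, hhf, neg_zero, comp_zero]

lemma cone_mem_of_isLeftApprox (h𝓡sub : IsSubcat 𝓡) (h𝓡 : IsRigidSubcat 𝓡)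
    (h𝓧 : IsTwoTermMaxRelRigid 𝓡 𝓧) (hR : R ∈ 𝓡) (hX : X ∈ 𝓧) (hf : IsLeftApprox 𝓧 f)
    (H : Triangle.mk f g h ∈ distTriang C) : Y ∈ 𝓧 := by
  obtain ⟨hsub, hrigid, hmax⟩ := h𝓧
  have hg : IsRightApprox 𝓡 g := h𝓡.isRightApprox hR H
  have hYto : relOrthTo 𝓡 𝓧 Y := relOrthTo_cone_of_isLeftApprox (hrigid X hX) hf H
  have hYfrom : relOrthFrom 𝓡 𝓧 Y := fun X' hX' =>
    RelOrth.of_isRightApprox hg (hrigid X' hX' X hX)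
  have hYY : RelOrth 𝓡 Y Y := .of_isRightApprox hg (hYto X hX)
  exact hmax Y (cone_mem_twoTerm h𝓡sub h𝓡 hR (hsub hX) H) (hrigid.veeAdd hYto hYfrom hYY)

lemma mem_of_isRightApprox_cone (h𝓡sub : IsSubcat 𝓡) (h𝓡 : IsRigidSubcat 𝓡)
    (h𝓧 : IsTwoTermMaxRelRigid 𝓡 𝓧) (hR : R ∈ 𝓡) (hY : Y ∈ 𝓧) (hh : IsRightApprox 𝓧 h)
    (H : Triangle.mk f g h ∈ distTriang C) : X ∈ 𝓧 := by
  obtain ⟨hsub, hrigid, hmax⟩ := h𝓧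
  have hg : IsLeftApprox (shiftSet 𝓡 1) g := h𝓡.isLeftApprox hR H
  have hXfrom : relOrthFrom 𝓡 𝓧 X :=
    relOrthFrom_of_isRightApprox_cone (fun X' hX' => hrigid X' hX' Y hY) hh H
  have hXto : relOrthTo 𝓡 𝓧 X := fun X' hX' =>
    RelOrth.of_isLeftApprox_shift hg (hrigid Y hY X' hX')
  have hXX : RelOrth 𝓡 X X := .of_isLeftApprox_shift hg (hXfrom Y hY)
  exact hmax X (mem_twoTerm_of_cone_mem h𝓡sub h𝓡 hR (hsub hY) H) (hrigid.veeAdd hXto hXfrom hXX)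

end TwoTerm

theorem rigid_subset_shiftNegOne_star_general {𝓡 𝓧 : Set C} (h𝓡sub : IsSubcat 𝓡)
    (h𝓡 : IsRigidSubcat 𝓡) (h𝓧max : IsTwoTermMaxRelRigid 𝓡 𝓧)
    (happrox : ∀ R ∈ 𝓡, (∃ X ∈ 𝓧, ∃ f : R ⟶ X, IsLeftApprox 𝓧 f) ∨
      ∃ X ∈ 𝓧, ∃ w : X ⟶ R⟦(1 : ℤ)⟧, IsRightApprox 𝓧 w) :
    ∀ R ∈ 𝓡, R ∈ starSet (shiftSet 𝓧 (-1)) 𝓧 := by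
  intro R hR
  rcases happrox R hR with ⟨X, hX, f, hf⟩ | ⟨X, hX, w, hw⟩
  · obtain ⟨Y, g, h, H⟩ := distinguished_cocone_triangle f
    exact mem_starSet_shiftSet_neg_one hX
      (cone_mem_of_isLeftApprox h𝓡sub h𝓡 h𝓧max hR hX hf H) H
  · obtain ⟨Z, i, p, H⟩ := distinguished_cocone_triangle₂ w
    exact mem_starSet_shiftSet_neg_one
      (mem_of_isRightApprox_cone h𝓡sub h𝓡 h𝓧max hR hX hw H) hX H

/-- **Corollary (Statement 3).** Let `𝓧` be a covariantly finite or contravariantly finite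
two-term maximal `𝓡[1]`-rigid subcategory. Then `𝓡 ⊆ 𝓧[-1] ∗ 𝓧`. -/
theorem rigid_subset_shiftNegOne_star
    (k : Type*) [Field k] [IsAlgClosed k] [Linear k C]
    [∀ X Y : C, FiniteDimensional k (X ⟶ Y)] [IsIdempotentComplete C]
    (𝓡 𝓧 : Set C) (h𝓡sub : IsSubcat 𝓡) (h𝓡 : IsRigidSubcat 𝓡)
    (h𝓧sub : IsSubcat 𝓧) (h𝓧max : IsTwoTermMaxRelRigid 𝓡 𝓧)
    (hfin : CovariantlyFinite 𝓧 ∨ ContravariantlyFinite 𝓧) :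
    ∀ R ∈ 𝓡, R ∈ starSet (shiftSet 𝓧 (-1)) 𝓧 :=
  rigid_subset_shiftNegOne_star_general h𝓡sub h𝓡 h𝓧max fun R _ =>
    hfin.imp (fun hcov => hcov R) (fun hcon => hcon (R⟦(1 : ℤ)⟧))
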